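/- Let C be a group system, t ∈ ℤ, and k ≥ 1. Then the granule Γ^{[t,t+k]} = C^{[t,t+k]}/(C^{[t,t+k−1]}C^{[t+1,t+k]}) is isomorphic to Λ^{[t,t+k]} = π^{[t,t+k]}(D_k^t)/π^{[t,t+k]}(D_{k−1}^t), via the map sending the coset of a ∈ C^{[t,t+k]} to the coset of π^{[t,t+k]}(a). -/

import Mathlib

open scoped Pointwise

namespace GroupSystemPaper

variable {A : ℤ → Type*} [∀ t, Group (A t)]

/-- `C^{t+}` : codewords of the group system `C` that are the identity before time `t`. -/
def Cplus (C : Subgroup (∀ t, A t)) (t : ℤ) : Subgroup C where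
  carrier := {a | ∀ n < t, (a : ∀ s, A s) n = 1}
  one_mem' := by intro n hn; simp
  mul_mem' := by intro a b ha hb n hn; simp [ha n hn, hb n hn]
  inv_mem' := by intro a ha n hn; simp [ha n hn]

/-- `C^{t−}` : codewords of the group system `C` that are the identity from time `t` on. -/
def Cminus (C : Subgroup (∀ t, A t)) (t : ℤ) : Subgroup C where
  carrier := {a | ∀ n, t ≤ n → (a : ∀ s, A s) n = 1}
  one_mem' := by intro n hn; simp
  mul_mem' := by intro a b ha hb n hn; simp [ha n hn, hb n hn]
  inv_mem' := by intro a ha n hn; simp [ha n hn]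

/-- `C^{[t₁,t₂]}` : codewords supported on the interval `[t₁, t₂]`. -/
def Cint (C : Subgroup (∀ t, A t)) (t₁ t₂ : ℤ) : Subgroup C :=
  Cplus C t₁ ⊓ Cminus C (t₂ + 1)

instance Cplus_normal (C : Subgroup (∀ t, A t)) (t : ℤ) : (Cplus C t).Normal := by
  constructor
  intro x hx g n hn
  have h1 : (x : ∀ s, A s) n = 1 := hx n hn
  simp [h1]

instance Cminus_normal (C : Subgroup (∀ t, A t)) (t : ℤ) : (Cminus C t).Normal := by
  constructor
  intro x hx g n hn
  have h1 : (x : ∀ s, A s) n = 1 := hx n hn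
  simp [h1]

instance Cint_normal (C : Subgroup (∀ t, A t)) (t₁ t₂ : ℤ) : (Cint C t₁ t₂).Normal := by
  constructor
  intro x hx g
  rcases Subgroup.mem_inf.mp hx with ⟨h1, h2⟩
  exact Subgroup.mem_inf.mpr
    ⟨(Cplus_normal C t₁).conj_mem _ h1 g, (Cminus_normal C (t₂ + 1)).conj_mem _ h2 g⟩

/-- The normal subgroup `C^{t−}C^{t+}` of `C`. -/
def stateN (C : Subgroup (∀ t, A t)) (t : ℤ) : Subgroup C :=
  Cminus C t ⊔ Cplus C t

instance stateN_normal (C : Subgroup (∀ t, A t)) (t : ℤ) : (stateN C t).Normal :=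
  Subgroup.sup_normal _ _

/-- The canonical state space `Σ^t = C/(C^{t−}C^{t+})`. -/
abbrev State (C : Subgroup (∀ t, A t)) (t : ℤ) : Type _ :=
  ↥C ⧸ stateN C t

/-- The state projection `σ^t : C → Σ^t`. -/
def sigma (C : Subgroup (∀ t, A t)) (t : ℤ) : ↥C →* State C t :=
  QuotientGroup.mk' (stateN C t)

/-- The evaluation homomorphism `χ^t : C → A^t`. -/
def evalHom (C : Subgroup (∀ t, A t)) (t : ℤ) : ↥C →* A t :=
  (Pi.evalMonoidHom A t).comp C.subtype

/-- The branch homomorphism `β^t : C → Σ^t × A^t × Σ^{t+1}`. -/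
def beta (C : Subgroup (∀ t, A t)) (t : ℤ) :
    ↥C →* State C t × A t × State C (t + 1) :=
  (sigma C t).prod ((evalHom C t).prod (sigma C (t + 1)))

/-- The branch group `B^t = β^t(C)`. -/
def Branch (C : Subgroup (∀ t, A t)) (t : ℤ) :
    Subgroup (State C t × A t × State C (t + 1)) :=
  (beta C t).range

/-- `β^t` with codomain restricted to the branch group `B^t`. -/
def betaRes (C : Subgroup (∀ t, A t)) (t : ℤ) : ↥C →* ↥(Branch C t) :=
  (beta C t).rangeRestrict

/-- `X_j^t = β^t(C^{(t−j)+})` as a subgroup of the branch group `B^t`. -/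
def X (C : Subgroup (∀ t, A t)) (j t : ℤ) : Subgroup ↥(Branch C t) :=
  (Cplus C (t - j)).map (betaRes C t)

/-- `Y_i^t = β^t(C^{(t+i+1)−})` as a subgroup of the branch group `B^t`. -/
def Y (C : Subgroup (∀ t, A t)) (i t : ℤ) : Subgroup ↥(Branch C t) :=
  (Cminus C (t + i + 1)).map (betaRes C t)

instance X_normal (C : Subgroup (∀ t, A t)) (j t : ℤ) : (X C j t).Normal :=
  (Cplus_normal C (t - j)).map _ (MonoidHom.rangeRestrict_surjective _)

instance Y_normal (C : Subgroup (∀ t, A t)) (i t : ℤ) : (Y C i t).Normal :=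
  (Cminus_normal C (t + i + 1)).map _ (MonoidHom.rangeRestrict_surjective _)

/-- `Δ_k^t = X_0^t ∩ Y_k^t`. -/
def Del (C : Subgroup (∀ t, A t)) (k t : ℤ) : Subgroup ↥(Branch C t) :=
  X C 0 t ⊓ Y C k t

/-- `D_k^t = {a ∈ C : β^t(a) ∈ Δ_k^t}`. -/
def D (C : Subgroup (∀ t, A t)) (k t : ℤ) : Subgroup ↥C :=
  (Del C k t).comap (betaRes C t)

/-- Following-branch operator: for `S ⊆ B^{t₁}`,
`FSet C t₁ t₂ S = {β^{t₂}(a) : a ∈ C, β^{t₁}(a) ∈ S}`. -/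
def FSet (C : Subgroup (∀ t, A t)) (t₁ t₂ : ℤ) (S : Set ↥(Branch C t₁)) :
    Set ↥(Branch C t₂) :=
  {x | ∃ a : ↥C, betaRes C t₁ a ∈ S ∧ betaRes C t₂ a = x}

/-- `π^{[t,t+k]} : C → B^t × ⋯ × B^{t+k}`, `a ↦ (β^t(a), …, β^{t+k}(a))`. -/
def piSeg (C : Subgroup (∀ t, A t)) (t : ℤ) (k : ℕ) :
    ↥C →* ∀ j : Fin (k + 1), ↥(Branch C (t + ((j : ℕ) : ℤ))) where
  toFun a := fun j => betaRes C (t + ((j : ℕ) : ℤ)) a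
  map_one' := by funext j; simp
  map_mul' a b := by funext j; simp

/-- `π^{[t,t+k]}(D_m^t)`. -/
def Pseg (C : Subgroup (∀ t, A t)) (t : ℤ) (k : ℕ) (m : ℤ) :
    Subgroup (∀ j : Fin (k + 1), ↥(Branch C (t + ((j : ℕ) : ℤ)))) :=
  (D C m t).map (piSeg C t k)

/-- `β^{t+j}(D_m^t)` : the image of `D_m^t` in the branch group at time `t + j`. -/
def Qb (C : Subgroup (∀ t, A t)) (t m j : ℤ) : Subgroup ↥(Branch C (t + j)) :=
  (D C m t).map (betaRes C (t + j))

/-- The normal subgroup `C^{[t,t+k−1]}C^{[t+1,t+k]}` of `C` (denominator of the granule). -/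
def granN (C : Subgroup (∀ t, A t)) (t : ℤ) (k : ℕ) : Subgroup ↥C :=
  Cint C t (t + k - 1) ⊔ Cint C (t + 1) (t + k)

instance granN_normal (C : Subgroup (∀ t, A t)) (t : ℤ) (k : ℕ) : (granN C t k).Normal :=
  Subgroup.sup_normal _ _

lemma mem_D_of_mem_Cint (C : Subgroup (∀ t, A t)) (t : ℤ) (k : ℕ) {a : ↥C}
    (ha : a ∈ Cint C t (t + k)) : a ∈ D C (k : ℤ) t := by
  rcases Subgroup.mem_inf.mp ha with ⟨h1, h2⟩
  refine Subgroup.mem_comap.mpr (Subgroup.mem_inf.mpr ⟨?_, ?_⟩)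
  · exact Subgroup.mem_map.mpr ⟨a, by simpa using h1, rfl⟩
  · exact Subgroup.mem_map.mpr ⟨a, h2, rfl⟩

/-- `ℓ`-controllability of the group system `C`. -/
def Controllable (C : Subgroup (∀ t, A t)) (ℓ : ℕ) : Prop :=
  ∀ a b : ↥C, ∀ t : ℤ, ∃ c : ↥C,
    (∀ n < t, (c : ∀ s, A s) n = (a : ∀ s, A s) n) ∧
    (∀ n, t + (ℓ : ℤ) ≤ n → (c : ∀ s, A s) n = (b : ∀ s, A s) n)


lemma mem_Cplus {C : Subgroup (∀ t, A t)} {t : ℤ} {a : ↥C} :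
    a ∈ Cplus C t ↔ ∀ n < t, (a : ∀ s, A s) n = 1 := Iff.rfl

lemma mem_Cminus {C : Subgroup (∀ t, A t)} {t : ℤ} {a : ↥C} :
    a ∈ Cminus C t ↔ ∀ n, t ≤ n → (a : ∀ s, A s) n = 1 := Iff.rfl

lemma betaRes_eq_one_iff (C : Subgroup (∀ t, A t)) (t : ℤ) (a : ↥C) :
    betaRes C t a = 1 ↔
      a ∈ stateN C t ∧ (a : ∀ s, A s) t = 1 ∧ a ∈ stateN C (t + 1) := by
  have h : betaRes C t a = 1 ↔ beta C t a = 1 := by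
    rw [Subtype.ext_iff]; rfl
  rw [h]
  have h2 : beta C t a = (sigma C t a, (a : ∀ s, A s) t, sigma C (t + 1) a) := rfl
  rw [h2, Prod.mk_eq_one, Prod.mk_eq_one]
  simp [sigma, QuotientGroup.eq_one_iff]

lemma betaRes_one_of_Cplus (C : Subgroup (∀ t, A t)) (t : ℤ) {a : ↥C}
    (ha : a ∈ Cplus C (t + 1)) : betaRes C t a = 1 := by
  rw [betaRes_eq_one_iff]
  refine ⟨Subgroup.mem_sup_right ?_, ha t (by omega), Subgroup.mem_sup_right ha⟩
  intro n hn
  exact ha n (by omega)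

lemma exists_of_betaRes_one (C : Subgroup (∀ t, A t)) (t : ℤ) {a : ↥C}
    (ha : betaRes C t a = 1) :
    (a : ∀ s, A s) t = 1 ∧ ∃ n ∈ Cminus C t, ∃ r ∈ Cplus C (t + 1), n * r = a := by
  rw [betaRes_eq_one_iff] at ha
  obtain ⟨h1, h2, -⟩ := ha
  refine ⟨h2, ?_⟩
  obtain ⟨n, hn, r, hr, rfl⟩ := Subgroup.mem_sup_of_normal_right.mp h1
  refine ⟨n, hn, r, ?_, rfl⟩
  intro m hm
  rcases lt_or_eq_of_le (Int.lt_add_one_iff.mp hm) with h | rfl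
  · exact hr m h
  · have := hn m le_rfl
    simpa [this] using h2

lemma mem_D_iff (C : Subgroup (∀ t, A t)) (t k : ℤ) (hk : 0 ≤ k) (a : ↥C) :
    a ∈ D C k t ↔ ∃ c ∈ Cint C t (t + k), betaRes C t c = betaRes C t a := by
  constructor
  · intro h
    obtain ⟨⟨p, hp, hpa⟩, ⟨m, hm, hma⟩⟩ := Subgroup.mem_inf.mp (Subgroup.mem_comap.mp h)
    have h1 : betaRes C t (p⁻¹ * m) = 1 := by
      rw [map_mul, map_inv, hpa, hma, inv_mul_cancel]
    obtain ⟨-, n, hn, r, hr, hnr⟩ := exists_of_betaRes_one C t h1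
    have hp' : p ∈ Cplus C t := by simpa using hp
    have hm' : m ∈ Cminus C (t + k + 1) := hm
    refine ⟨p * r, Subgroup.mem_inf.mpr ⟨mul_mem hp' fun i hi => hr i (by omega), ?_⟩, ?_⟩
    · have hc : p * r = (p * n⁻¹ * p⁻¹) * m := by
        have : m = p * (n * r) := by rw [hnr]; group
        rw [this]; group
      rw [hc]
      refine mul_mem ((Cminus_normal C _).conj_mem _ (inv_mem fun i hi => ?_) p) hm'
      exact hn i (by omega)
    · rw [map_mul, betaRes_one_of_Cplus C t hr, mul_one, hpa]
  · rintro ⟨c, hc, hca⟩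
    rcases Subgroup.mem_inf.mp hc with ⟨h1, h2⟩
    refine Subgroup.mem_comap.mpr (Subgroup.mem_inf.mpr ⟨?_, ?_⟩)
    · exact Subgroup.mem_map.mpr ⟨c, by simpa using h1, hca⟩
    · exact Subgroup.mem_map.mpr ⟨c, h2, hca⟩

instance D_normal (C : Subgroup (∀ t, A t)) (k t : ℤ) : (D C k t).Normal := by
  unfold D Del
  infer_instance

lemma betaRes_of_piSeg (C : Subgroup (∀ t, A t)) (t : ℤ) (k : ℕ) {a : ↥C}
    (h : piSeg C t k a = 1) : betaRes C t a = 1 := by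
  have h0 : betaRes C (t + (((0 : Fin (k + 1)) : ℕ) : ℤ)) a = 1 := congrFun h 0
  have e : t + (((0 : Fin (k + 1)) : ℕ) : ℤ) = t := by simp
  rwa [e] at h0

lemma mem_D_of_betaRes_one (C : Subgroup (∀ t, A t)) (t k : ℤ) {a : ↥C}
    (h : betaRes C t a = 1) : a ∈ D C k t := by
  refine Subgroup.mem_comap.mpr ?_
  rw [h]; exact one_mem _

lemma piSeg_mem_iff (C : Subgroup (∀ t, A t)) (t : ℤ) (k : ℕ) (m : ℤ) (a : ↥C) :
    piSeg C t k a ∈ Pseg C t k m ↔ a ∈ D C m t := by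
  constructor
  · rintro ⟨d, hd, hda⟩
    have h1 : piSeg C t k (d⁻¹ * a) = 1 := by
      rw [map_mul, map_inv, hda, inv_mul_cancel]
    have h2 := mem_D_of_betaRes_one C t m (betaRes_of_piSeg C t k h1)
    have : a = d * (d⁻¹ * a) := by group
    rw [this]; exact mul_mem hd h2
  · exact fun h => Subgroup.mem_map_of_mem _ h

lemma granule_key (C : Subgroup (∀ t, A t)) (t : ℤ) (k : ℕ) (hk : 1 ≤ k) (a : ↥C)
    (ha : a ∈ Cint C t (t + (k : ℤ))) :
    a ∈ D C ((k : ℤ) - 1) t ↔ a ∈ granN C t k := by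
  have hk' : (0 : ℤ) ≤ (k : ℤ) - 1 := by omega
  have hsub : Cint C t (t + k - 1) ≤ Cint C t (t + (k : ℤ)) :=
    fun c hc => ⟨hc.1, fun i hi => hc.2 i (by omega)⟩
  constructor
  · intro h
    obtain ⟨c, hc, hca⟩ := (mem_D_iff C t _ hk' a).mp h
    rw [← add_sub_assoc] at hc
    have h1 : betaRes C t (c⁻¹ * a) = 1 := by
      rw [map_mul, map_inv, hca, inv_mul_cancel]
    have h2 := (exists_of_betaRes_one C t h1).1
    have h3 : c⁻¹ * a ∈ Cint C t (t + (k : ℤ)) := mul_mem (inv_mem (hsub hc)) ha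
    have : a = c * (c⁻¹ * a) := by group
    rw [this]
    refine mul_mem (Subgroup.mem_sup_left hc) (Subgroup.mem_sup_right ⟨?_, h3.2⟩)
    intro i hi
    rcases lt_or_eq_of_le (Int.lt_add_one_iff.mp hi) with h | rfl
    · exact h3.1 i h
    · exact h2
  · intro h
    refine (sup_le ?_ ?_ : granN C t k ≤ D C ((k : ℤ) - 1) t) h
    · intro c hc
      exact (mem_D_iff C t _ hk' c).mpr ⟨c, by rwa [← add_sub_assoc], rfl⟩
    · intro c hc
      exact mem_D_of_betaRes_one C t _ (betaRes_one_of_Cplus C t hc.1)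

/-- The granule `Γ^{[t,t+k]} = C^{[t,t+k]}/(C^{[t,t+k−1]}C^{[t+1,t+k]})`
is isomorphic to `Λ^{[t,t+k]} = π^{[t,t+k]}(D_k^t)/π^{[t,t+k]}(D_{k−1}^t)` via the map
sending the coset of `a ∈ C^{[t,t+k]}` to the coset of `π^{[t,t+k]}(a)`. -/
theorem statement14 (C : Subgroup (∀ t, A t)) (t : ℤ) (k : ℕ) (hk : 1 ≤ k) :
    ((Pseg C t k ((k : ℤ) - 1)).subgroupOf (Pseg C t k (k : ℤ))).Normal ∧
    ∀ (hP : ((Pseg C t k ((k : ℤ) - 1)).subgroupOf (Pseg C t k (k : ℤ))).Normal),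
      haveI := hP
      ∃ e : (↥(Cint C t (t + (k : ℤ))) ⧸
               (granN C t k).subgroupOf (Cint C t (t + (k : ℤ)))) ≃*
            (↥(Pseg C t k (k : ℤ)) ⧸
               (Pseg C t k ((k : ℤ) - 1)).subgroupOf (Pseg C t k (k : ℤ))),
        ∀ (a : ↥C) (ha : a ∈ Cint C t (t + (k : ℤ))),
          e (QuotientGroup.mk ⟨a, ha⟩) =
            QuotientGroup.mk
              ⟨piSeg C t k a, Subgroup.mem_map_of_mem _ (mem_D_of_mem_Cint C t k ha)⟩ := by
  refine ⟨⟨?_⟩, ?_⟩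
  · rintro ⟨_, x, hx, rfl⟩ hn ⟨_, y, hy, rfl⟩
    rw [Subgroup.mem_subgroupOf] at hn ⊢
    have h1 : x ∈ D C ((k : ℤ) - 1) t := (piSeg_mem_iff C t k _ x).mp hn
    have h2 := (piSeg_mem_iff C t k _ _).mpr ((D_normal C ((k : ℤ) - 1) t).conj_mem x h1 y)
    simpa using h2
  · intro hP
    let f₀ : ↥(Cint C t (t + (k : ℤ))) →* ↥(Pseg C t k (k : ℤ)) :=
      ((piSeg C t k).comp (Subgroup.subtype _)).codRestrict _
        (fun a => Subgroup.mem_map_of_mem _ (mem_D_of_mem_Cint C t k a.2))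
    let f := (QuotientGroup.mk' ((Pseg C t k ((k : ℤ) - 1)).subgroupOf
      (Pseg C t k (k : ℤ)))).comp f₀
    have hker : (granN C t k).subgroupOf (Cint C t (t + (k : ℤ))) = f.ker := by
      ext ⟨a, ha⟩
      rw [Subgroup.mem_subgroupOf, MonoidHom.mem_ker]
      change a ∈ granN C t k ↔ QuotientGroup.mk (f₀ ⟨a, ha⟩) = _
      rw [QuotientGroup.eq_one_iff, Subgroup.mem_subgroupOf]
      change _ ↔ piSeg C t k a ∈ _
      rw [piSeg_mem_iff, granule_key C t k hk a ha]
    have hsurj : Function.Surjective f := by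
      intro q
      obtain ⟨⟨_, d, hd, rfl⟩, rfl⟩ := QuotientGroup.mk_surjective q
      obtain ⟨c, hc, hcd⟩ := (mem_D_iff C t k (by omega) d).mp hd
      refine ⟨⟨c, hc⟩, ?_⟩
      change QuotientGroup.mk (f₀ ⟨c, hc⟩) = _
      rw [QuotientGroup.eq, Subgroup.mem_subgroupOf]
      have h1 : betaRes C t (c⁻¹ * d) = 1 := by
        rw [map_mul, map_inv, hcd, inv_mul_cancel]
      have h2 := (piSeg_mem_iff C t k ((k : ℤ) - 1) _).mpr (mem_D_of_betaRes_one C t _ h1)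
      rw [map_mul, map_inv] at h2
      exact h2
    refine ⟨(QuotientGroup.quotientMulEquivOfEq hker).trans
      (QuotientGroup.quotientKerEquivOfSurjective f hsurj), ?_⟩
    intro a ha
    rfl

end GroupSystemPaper
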